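/- Let d ≥ 1, k ∈ ℕ, ρ > 0, and let p, q ∈ [1, +∞) satisfy p ≤ q and 1/q ≥ 1/p − 1/d. There exists a constant C > 0 depending only on d, ρ, k, q and p such that the following holds. Let Ω ⊆ ℝ^d be open and bounded, and let T_1, …, T_n be finitely many pairwise disjoint open subsets of Ω, each T_i with diameter h_{T_i} star-shaped with respect to a ball of radius ρ·h_{T_i}, such that Ω ∖ (T_1 ∪ … ∪ T_n) has Lebesgue measure zero; set h = max_i h_{T_i}. Let w : Ω → ℝ be such that for each i there is a polynomial w_i : ℝ^d → ℝ of total degree at most k with w = w_i on T_i and ∫_{T_i} w_i(x) dx = 0. Then ‖w‖_{L^q(Ω)} ≤ C · h^{1 + d/q − d/p} · ( Σ_{i=1}^n ‖∇w_i‖_{L^p(T_i; ℝ^d)}^p )^{1/p}. -/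

import Mathlib

/-!
On a finite-dimensional space of analytic functions all norms are equivalent, and the `L^p` norm
over any ball is one of them because an analytic function vanishing on an open set is zero.
Applied on reference balls to the derivatives of polynomials of degree at most `k` and rescaled,
this bounds `∇f` on the ball of radius `h = diam T` about `c`, which contains `T`, by
`h ^ (-d / p)` times its `L^p` norm over the ball of radius `ρ * h` about `c`, which `T` contains.
Hence `f` is Lipschitz on `T`; as its mean is zero, it is at most `h` times that bound, and
taking its `L^q` norm over `T` contributes another `h ^ (d / q)`. The local estimates add up
because `ℓ^p ⊆ ℓ^q` for `p ≤ q`, and the nonnegative exponent `1 + d / q - d / p` allows every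
`diam T` to be replaced by the supremum.
-/

open MeasureTheory Metric Set
open scoped ENNReal

noncomputable section

/-- `w : ℝ^d → ℝ` is (given by) a multivariate polynomial of total degree at most `k`. -/
def IsPolyDegLE (d k : ℕ) (w : EuclideanSpace ℝ (Fin d) → ℝ) : Prop :=
  ∃ P : MvPolynomial (Fin d) ℝ, P.totalDegree ≤ k ∧ ∀ x, w x = MvPolynomial.eval (fun i => x i) P

/-- `T` is star-shaped with respect to a ball of radius `ρ * diam T`. -/
def StarShapedWrtBall {d : ℕ} (ρ : ℝ) (T : Set (EuclideanSpace ℝ (Fin d))) : Prop :=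
  ∃ c, Metric.ball c (ρ * Metric.diam T) ⊆ T ∧
    ∀ x ∈ Metric.ball c (ρ * Metric.diam T), ∀ y ∈ T, segment ℝ x y ⊆ T

section Measure

variable {α F : Type*} [MeasurableSpace α] {μ : Measure α} [NormedAddCommGroup F]

lemma tsum_rpow_le_rpow_tsum {ι : Type*} (a : ι → ℝ≥0∞) {r : ℝ} (hr : 1 ≤ r) :
    ∑' i, a i ^ r ≤ (∑' i, a i) ^ r := by
  have split (t : ℝ≥0∞) : t ^ r = t * t ^ (r - 1) := by
    conv_lhs => rw [← add_sub_cancel 1 r,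
      ENNReal.rpow_add_of_nonneg 1 (r - 1) zero_le_one (sub_nonneg.2 hr), ENNReal.rpow_one]
  calc ∑' i, a i ^ r = ∑' i, a i * a i ^ (r - 1) := by simp only [split]
    _ ≤ ∑' i, a i * (∑' j, a j) ^ (r - 1) := by
        gcongr with i
        exact ENNReal.le_tsum i
    _ = (∑' i, a i) ^ r := by rw [ENNReal.tsum_mul_right, ← split]

lemma memLp_restrict_of_continuous_of_isBounded {X : Type*} [PseudoMetricSpace X] [ProperSpace X]
    [MeasurableSpace X] [OpensMeasurableSpace X] {μ : Measure X} [IsFiniteMeasureOnCompacts μ]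
    {f : X → F} (hf : Continuous f) {T : Set X} (hT : Bornology.IsBounded T) (p : ℝ≥0∞) :
    MemLp f p (μ.restrict T) := by
  have hK : IsCompact (closure T) := hT.isCompact_closure
  obtain ⟨B, hB⟩ := hK.exists_bound_of_continuousOn hf.continuousOn
  have : IsFiniteMeasure (μ.restrict (closure T)) := ⟨by simpa using hK.measure_lt_top⟩
  have memLp_closure : MemLp f p (μ.restrict (closure T)) :=
    .of_bound hf.aestronglyMeasurable B
      (ae_restrict_of_forall_mem isClosed_closure.measurableSet hB)
  exact memLp_closure.mono_measure (Measure.restrict_mono subset_closure le_rfl)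

lemma eLpNorm_ofReal_rpow_eq_lintegral (f : α → F) {q : ℝ} (hq : 0 < q) :
    eLpNorm f (ENNReal.ofReal q) μ ^ q = ∫⁻ x, ‖f x‖ₑ ^ q ∂μ := by
  rw [eLpNorm_eq_lintegral_rpow_enorm_toReal (by simpa using hq) ENNReal.ofReal_ne_top,
    ENNReal.toReal_ofReal hq.le, one_div, ENNReal.rpow_inv_rpow hq.ne']

lemma eLpNorm_restrict_iUnion_rpow_le {ι : Type*} [Countable ι] (T : ι → Set α) (f : α → F)
    {q : ℝ} (hq : 0 < q) :
    eLpNorm f (ENNReal.ofReal q) (μ.restrict (⋃ i, T i)) ^ q ≤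
      ∑' i, eLpNorm f (ENNReal.ofReal q) (μ.restrict (T i)) ^ q := by
  simp only [eLpNorm_ofReal_rpow_eq_lintegral f hq]
  exact lintegral_iUnion_le T _

lemma eLpNorm_restrict_iUnion_le_mul_tsum_rpow {ι : Type*} [Countable ι] {T : ι → Set α}
    {f : α → F} {p q : ℝ} (hp : 0 < p) (hpq : p ≤ q) {K : ℝ≥0∞} {G : ι → ℝ≥0∞}
    (h : ∀ i, eLpNorm f (ENNReal.ofReal q) (μ.restrict (T i)) ≤ K * G i) :
    eLpNorm f (ENNReal.ofReal q) (μ.restrict (⋃ i, T i)) ≤ K * (∑' i, G i ^ p) ^ (1 / p) := by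
  have hq : 0 < q := hp.trans_le hpq
  rw [← ENNReal.rpow_le_rpow_iff hq]
  calc eLpNorm f (ENNReal.ofReal q) (μ.restrict (⋃ i, T i)) ^ q
      ≤ ∑' i, eLpNorm f (ENNReal.ofReal q) (μ.restrict (T i)) ^ q :=
        eLpNorm_restrict_iUnion_rpow_le T f hq
    _ ≤ ∑' i, (K * G i) ^ q := by gcongr with i; exact h i
    _ = K ^ q * ∑' i, (G i ^ p) ^ (q / p) := by
        simp only [ENNReal.mul_rpow_of_nonneg _ _ hq.le, ENNReal.tsum_mul_left,
          ← ENNReal.rpow_mul, mul_div_cancel₀ q hp.ne']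
    _ ≤ K ^ q * (∑' i, G i ^ p) ^ (q / p) := by
        gcongr
        exact tsum_rpow_le_rpow_tsum _ ((one_le_div hp).2 hpq)
    _ = (K * (∑' i, G i ^ p) ^ (1 / p)) ^ q := by
        rw [ENNReal.mul_rpow_of_nonneg _ _ hq.le, ← ENNReal.rpow_mul, one_div_mul_eq_div]

variable [NormedSpace ℝ F] [CompleteSpace F]

lemma norm_le_of_norm_sub_le_of_setIntegral_eq_zero {T : Set α} {f : α → F} {B : ℝ}
    (hT : MeasurableSet T) (hT₀ : μ T ≠ 0) (hT_top : μ T ≠ ∞) (hf : IntegrableOn f T μ)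
    (hmean : ∫ x in T, f x ∂μ = 0) {x : α} (hB : ∀ y ∈ T, ‖f y - f x‖ ≤ B) : ‖f x‖ ≤ B := by
  have average_mem : ⨍ y in T, f y ∂μ ∈ closedBall (f x) B :=
    (convex_closedBall _ _).set_average_mem isClosed_closedBall hT₀ hT_top
      (ae_restrict_of_forall_mem hT fun y hy => mem_closedBall_iff_norm.2 (hB y hy)) hf
  simpa [setAverage_eq, hmean] using average_mem

lemma eLpNorm_restrict_le_of_lipschitzOnWith {X : Type*} [PseudoMetricSpace X] [MeasurableSpace X]
    [OpensMeasurableSpace X] [SecondCountableTopologyEither X F] {μ : Measure X} {T : Set X}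
    {f : X → F} {K : NNReal} {q : ℝ≥0∞} (hT : MeasurableSet T) (hT_bdd : Bornology.IsBounded T)
    (hT_top : μ T ≠ ∞) (hf : LipschitzOnWith K f T) (hmean : ∫ x in T, f x ∂μ = 0) :
    eLpNorm f q (μ.restrict T) ≤ μ T ^ q.toReal⁻¹ * ENNReal.ofReal (K * diam T) := by
  rcases eq_or_ne (μ T) 0 with hT₀ | hT₀
  · simp [Measure.restrict_eq_zero.2 hT₀]
  have norm_sub_le {x y} (hx : x ∈ T) (hy : y ∈ T) : ‖f y - f x‖ ≤ K * diam T := by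
    rw [← dist_eq_norm]
    exact (hf.dist_le_mul y hy x hx).trans (by gcongr; exact dist_le_diam_of_mem hT_bdd hy hx)
  have hf_int : IntegrableOn f T μ := by
    obtain ⟨x₀, hx₀⟩ := nonempty_of_measure_ne_zero hT₀
    refine .of_bound hT_top.lt_top (hf.continuousOn.aestronglyMeasurable hT) (K * diam T + ‖f x₀‖)
      (ae_restrict_of_forall_mem hT fun y hy => ?_)
    exact (norm_le_norm_sub_add _ _).trans (by gcongr; exact norm_sub_le hx₀ hy)
  have norm_le (x) (hx : x ∈ T) : ‖f x‖ ≤ K * diam T :=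
    norm_le_of_norm_sub_le_of_setIntegral_eq_zero hT hT₀ hT_top hf_int hmean
      fun _ hy => norm_sub_le hx hy
  simpa using eLpNorm_le_of_ae_bound (p := q) (ae_restrict_of_forall_mem hT norm_le)

end Measure

section FiniteDimensional

variable {F : Type*} [NormedAddCommGroup F] [NormedSpace ℝ F]

lemma exists_norm_le_mul_norm_of_injective {V X Y : Type*} [AddCommGroup V] [Module ℝ V]
    [FiniteDimensional ℝ V] [NormedAddCommGroup X] [NormedSpace ℝ X] [SeminormedAddCommGroup Y]
    [NormedSpace ℝ Y] {A : V →ₗ[ℝ] X} (hA : Function.Injective A) (B : V →ₗ[ℝ] Y) :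
    ∃ C : ℝ, 0 < C ∧ ∀ v, ‖B v‖ ≤ C * ‖A v‖ := by
  let e := LinearEquiv.ofInjective A hA
  let L := (B ∘ₗ e.symm.toLinearMap).toContinuousLinearMap
  refine ⟨‖L‖ + 1, by positivity, fun v => ?_⟩
  calc ‖B v‖ = ‖L (e v)‖ := by simp [L]
    _ ≤ ‖L‖ * ‖e v‖ := L.le_opNorm _
    _ ≤ (‖L‖ + 1) * ‖A v‖ := by gcongr; exacts [(lt_add_one _).le, le_rfl]

lemma exists_enorm_le_mul_eLpNorm_of_eqOn_imp_eq {X : Type*} [TopologicalSpace X]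
    [MeasurableSpace X] {μ : Measure X} [μ.IsOpenPosMeasure] {V : Submodule ℝ (X → F)}
    [FiniteDimensional ℝ V] {p : ℝ≥0∞} (hp : 1 ≤ p) {U K : Set X} (hU : IsOpen U)
    (hK : IsCompact K) (hV : ∀ f ∈ V, Continuous f) (hV_memLp : ∀ f ∈ V, MemLp f p (μ.restrict U))
    (hV_inj : ∀ f ∈ V, ∀ g ∈ V, EqOn f g U → f = g) :
    ∃ C : ℝ, 0 < C ∧ ∀ f ∈ V, ∀ x ∈ K,
      ‖f x‖ₑ ≤ ENNReal.ofReal C * eLpNorm f p (μ.restrict U) := by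
  have : Fact (1 ≤ p) := ⟨hp⟩
  have : CompactSpace K := isCompact_iff_compactSpace.1 hK
  let toLp : V →ₗ[ℝ] Lp F p (μ.restrict U) :=
    { toFun := fun f => (hV_memLp f f.2).toLp
      map_add' := fun f g => MemLp.toLp_add (hV_memLp f f.2) (hV_memLp g g.2)
      map_smul' := fun a f => MemLp.toLp_const_smul a (hV_memLp f f.2) }
  let restr : V →ₗ[ℝ] C(K, F) :=
    { toFun := fun f => ⟨fun x => (f : X → F) x, (hV f f.2).comp continuous_subtype_val⟩
      map_add' := fun _ _ => rfl
      map_smul' := fun _ _ => rfl }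
  have toLp_injective : Function.Injective toLp := fun f g hfg =>
    Subtype.ext <| hV_inj f f.2 g g.2 <| Measure.eqOn_open_of_ae_eq
      ((MemLp.toLp_eq_toLp_iff (hV_memLp f f.2) (hV_memLp g g.2)).1 hfg) hU
      (hV f f.2).continuousOn (hV g g.2).continuousOn
  obtain ⟨C, hC, bound⟩ := exists_norm_le_mul_norm_of_injective toLp_injective restr
  refine ⟨C, hC, fun f hf x hx => ?_⟩
  have norm_le : ‖f x‖ ≤ C * (eLpNorm f p (μ.restrict U)).toReal :=
    calc ‖f x‖ ≤ ‖restr ⟨f, hf⟩‖ := (restr ⟨f, hf⟩).norm_coe_le_norm ⟨x, hx⟩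
      _ ≤ C * ‖toLp ⟨f, hf⟩‖ := bound _
      _ = C * (eLpNorm f p (μ.restrict U)).toReal := by
          rw [← Lp.norm_toLp f (hV_memLp f hf)]; rfl
  rw [← ofReal_norm, ← ENNReal.ofReal_toReal (hV_memLp f hf).eLpNorm_ne_top,
    ← ENNReal.ofReal_mul hC.le]
  exact ENNReal.ofReal_le_ofReal norm_le

lemma exists_enorm_le_mul_eLpNorm_of_analyticOnNhd {E : Type*} [NormedAddCommGroup E]
    [NormedSpace ℝ E] [ProperSpace E] [MeasurableSpace E] [OpensMeasurableSpace E] (μ : Measure E)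
    [μ.IsOpenPosMeasure] [IsFiniteMeasureOnCompacts μ] {V : Submodule ℝ (E → F)}
    [FiniteDimensional ℝ V] (hV : ∀ f ∈ V, AnalyticOnNhd ℝ f univ) {p : ℝ≥0∞} (hp : 1 ≤ p)
    {U K : Set E} (hU : IsOpen U) (hU_ne : U.Nonempty) (hU_bdd : Bornology.IsBounded U)
    (hK : IsCompact K) :
    ∃ C : ℝ, 0 < C ∧ ∀ f ∈ V, ∀ x ∈ K,
      ‖f x‖ₑ ≤ ENNReal.ofReal C * eLpNorm f p (μ.restrict U) := by
  have hV_cont (f) (hf : f ∈ V) : Continuous f := (hV f hf).continuous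
  obtain ⟨x₀, hx₀⟩ := hU_ne
  exact exists_enorm_le_mul_eLpNorm_of_eqOn_imp_eq hp hU hK hV_cont
    (fun f hf => memLp_restrict_of_continuous_of_isBounded (hV_cont f hf) hU_bdd p)
    fun f hf g hg hfg => (hV f hf).eq_of_eventuallyEq (hV g hg)
      (hfg.eventuallyEq_of_mem (hU.mem_nhds hx₀))

end FiniteDimensional

open Module (finrank)

section Homothety

variable {E F : Type*} [NormedAddCommGroup E] [NormedSpace ℝ E] [NormedAddCommGroup F]

lemma preimage_const_add_smul_ball (c : E) {r : ℝ} (hr : 0 < r) (s : ℝ) :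
    (fun x => c + r • x) ⁻¹' ball c (s * r) = ball 0 s := by
  ext x
  simp [norm_smul, abs_of_pos hr, mul_comm s, hr]

lemma fderiv_comp_const_add_smul [NormedSpace ℝ F] (f : E → F) (c : E) (r : ℝ) :
    fderiv ℝ (fun x => f (c + r • x)) = fun x => r • fderiv ℝ f (c + r • x) := by
  ext1 x
  rw [fderiv_comp_smul (f := fun z => f (c + z)), fderiv_comp_add_left]

lemma eLpNorm_comp_const_add_smul [FiniteDimensional ℝ E] [MeasurableSpace E] [BorelSpace E]
    (μ : Measure E) [μ.IsAddHaarMeasure] (f : E → F) (p : ℝ≥0∞) (c : E) {r : ℝ} (hr : 0 < r)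
    (S : Set E) :
    eLpNorm (fun x => f (c + r • x)) p (μ.restrict ((fun x => c + r • x) ⁻¹' S)) =
      ENNReal.ofReal (r ^ (-(finrank ℝ E / p.toReal))) * eLpNorm f p (μ.restrict S) := by
  let φ : E ≃ₜ E := (Homeomorph.smulOfNeZero r hr.ne').trans (Homeomorph.addLeft c)
  have map_φ : μ.map φ = ENNReal.ofReal (r ^ finrank ℝ E)⁻¹ • μ := by
    change μ.map ((c + ·) ∘ (r • ·)) = _
    rw [← Measure.map_map (by fun_prop) (by fun_prop), Measure.map_addHaar_smul μ hr.ne',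
      Measure.map_smul, map_add_left_eq_self, abs_of_pos (by positivity)]
  have jacobian_ne_zero : ENNReal.ofReal (r ^ finrank ℝ E)⁻¹ ≠ 0 := by
    rw [ENNReal.ofReal_ne_zero_iff]
    positivity
  have jacobian_rpow : ENNReal.ofReal (r ^ finrank ℝ E)⁻¹ ^ (1 / p).toReal =
      ENNReal.ofReal (r ^ (-(finrank ℝ E / p.toReal))) := by
    rw [ENNReal.ofReal_rpow_of_pos (by positivity), ← Real.rpow_natCast, ← Real.rpow_neg hr.le,
      ← Real.rpow_mul hr.le, one_div, ENNReal.toReal_inv, neg_mul, div_eq_mul_inv]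
  change eLpNorm (f ∘ φ) p (μ.restrict (φ ⁻¹' S)) = _
  rw [← φ.measurableEmbedding.eLpNorm_map_measure, ← φ.measurableEmbedding.restrict_map, map_φ,
    Measure.restrict_smul, eLpNorm_smul_measure_of_ne_zero jacobian_ne_zero,
    jacobian_rpow, smul_eq_mul]

end Homothety

section Diam

variable {E F : Type*} [NormedAddCommGroup E] [NormedSpace ℝ E] [FiniteDimensional ℝ E]
  [MeasurableSpace E] [BorelSpace E] (μ : Measure E) [μ.IsAddHaarMeasure]

lemma addHaar_le_diam_pow_mul_addHaar_ball {T : Set E} (hT : Bornology.IsBounded T) :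
    μ T ≤ ENNReal.ofReal (diam T ^ finrank ℝ E) * μ (ball 0 1) := by
  rcases T.eq_empty_or_nonempty with rfl | ⟨x, hx⟩
  · simp
  rw [← Measure.addHaar_closedBall μ x diam_nonneg]
  exact measure_mono fun y hy => dist_le_diam_of_mem hT hy hx

lemma eLpNorm_restrict_le_diam_rpow_of_lipschitzOnWith [NormedAddCommGroup F] [NormedSpace ℝ F]
    [CompleteSpace F] {T : Set E} {f : E → F} {K : NNReal} {q : ℝ≥0∞} (hT : MeasurableSet T)
    (hT_bdd : Bornology.IsBounded T) (hf : LipschitzOnWith K f T)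
    (hmean : ∫ x in T, f x ∂μ = 0) :
    eLpNorm f q (μ.restrict T) ≤
      ENNReal.ofReal (μ.real (ball 0 1) ^ q.toReal⁻¹ * diam T ^ (1 + finrank ℝ E / q.toReal)) *
        K := by
  have measure_rpow_le : μ T ^ q.toReal⁻¹ ≤
      ENNReal.ofReal (diam T ^ (finrank ℝ E / q.toReal) * μ.real (ball 0 1) ^ q.toReal⁻¹) := by
    rw [div_eq_mul_inv, Real.rpow_natCast_mul diam_nonneg,
      ← Real.mul_rpow (by positivity) measureReal_nonneg,
      ← ENNReal.ofReal_rpow_of_nonneg (by positivity) (by positivity),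
      ENNReal.ofReal_mul (by positivity), ofReal_measureReal]
    gcongr
    exact addHaar_le_diam_pow_mul_addHaar_ball μ hT_bdd
  calc eLpNorm f q (μ.restrict T) ≤ μ T ^ q.toReal⁻¹ * ENNReal.ofReal (K * diam T) :=
        eLpNorm_restrict_le_of_lipschitzOnWith hT hT_bdd hT_bdd.measure_lt_top.ne hf hmean
    _ ≤ ENNReal.ofReal (diam T ^ (finrank ℝ E / q.toReal) * μ.real (ball 0 1) ^ q.toReal⁻¹) *
          ENNReal.ofReal (K * diam T) := by gcongr
    _ = _ := by
        rw [Real.rpow_add_of_nonneg diam_nonneg zero_le_one (by positivity), Real.rpow_one,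
          ← ENNReal.ofReal_coe_nnreal, ← ENNReal.ofReal_mul (by positivity),
          ← ENNReal.ofReal_mul (by positivity)]
        congr 1
        ring

end Diam

section PolynomialLike

variable {E F : Type*} [NormedAddCommGroup E] [NormedSpace ℝ E] [NormedAddCommGroup F]
  [NormedSpace ℝ F]

/-- A finite-dimensional space of analytic functions stable under composition with the homotheties
`x ↦ c + r • x`, `0 < r`. These are the only properties of the polynomials of degree at most `k`
that enter the Poincaré inequality, and they pass to the space of Fréchet derivatives. -/
structure IsPolynomialLike (V : Submodule ℝ (E → F)) : Prop where
  finiteDimensional : FiniteDimensional ℝ V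
  analyticOnNhd : ∀ f ∈ V, AnalyticOnNhd ℝ f univ
  comp_add_smul_mem : ∀ f ∈ V, ∀ (c : E) (r : ℝ), 0 < r → (fun x => f (c + r • x)) ∈ V

/-- The derivative `f ↦ Df` as a linear map on a space of differentiable functions. -/
def fderivLinearMap (V : Submodule ℝ (E → F)) (hV : ∀ f ∈ V, Differentiable ℝ f) :
    V →ₗ[ℝ] E → E →L[ℝ] F where
  toFun f := fderiv ℝ f
  map_add' f g := by ext1 x; exact fderiv_add (hV f f.2 x) (hV g g.2 x)
  map_smul' a f := by ext1 x; exact fderiv_const_smul (hV f f.2 x) a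

namespace IsPolynomialLike

variable {V : Submodule ℝ (E → F)}

lemma continuous (hV : IsPolynomialLike V) {f : E → F} (hf : f ∈ V) : Continuous f :=
  (hV.analyticOnNhd f hf).continuous

lemma differentiable (hV : IsPolynomialLike V) {f : E → F} (hf : f ∈ V) : Differentiable ℝ f :=
  fun x => (hV.analyticOnNhd f hf x (mem_univ x)).differentiableAt

lemma range_fderivLinearMap [CompleteSpace F] (hV : IsPolynomialLike V) :
    IsPolynomialLike (LinearMap.range (fderivLinearMap V fun _ => hV.differentiable)) where
  finiteDimensional := by
    have := hV.finiteDimensional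
    infer_instance
  analyticOnNhd := by
    rintro _ ⟨f, rfl⟩
    exact (hV.analyticOnNhd f f.2).fderiv
  comp_add_smul_mem := by
    rintro _ ⟨f, rfl⟩ c r hr
    refine ⟨r⁻¹ • ⟨_, hV.comp_add_smul_mem f f.2 c r hr⟩, ?_⟩
    rw [map_smul]
    change r⁻¹ • fderiv ℝ (fun x => (f : E → F) (c + r • x)) = _
    rw [fderiv_comp_const_add_smul]
    ext1 x
    exact inv_smul_smul₀ hr.ne' _

end IsPolynomialLike

variable [FiniteDimensional ℝ E] [MeasurableSpace E] [BorelSpace E]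
  (μ : Measure E) [μ.IsAddHaarMeasure]

namespace IsPolynomialLike

variable {V : Submodule ℝ (E → F)}

lemma exists_enorm_le_mul_eLpNorm_ball (hV : IsPolynomialLike V) {p : ℝ≥0∞} (hp : 1 ≤ p) {ρ : ℝ}
    (hρ : 0 < ρ) :
    ∃ C : ℝ, 0 < C ∧ ∀ f ∈ V, ∀ (c : E) (r : ℝ), 0 < r → ∀ x ∈ closedBall c r,
      ‖f x‖ₑ ≤ ENNReal.ofReal (C * r ^ (-(finrank ℝ E / p.toReal))) *
        eLpNorm f p (μ.restrict (ball c (ρ * r))) := by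
  have := hV.finiteDimensional
  obtain ⟨C, hC, bound⟩ := exists_enorm_le_mul_eLpNorm_of_analyticOnNhd μ hV.analyticOnNhd hp
    isOpen_ball (nonempty_ball.2 hρ) isBounded_ball (isCompact_closedBall (0 : E) 1)
  refine ⟨C, hC, fun f hf c r hr x hx => ?_⟩
  have preimage_mem : r⁻¹ • (x - c) ∈ closedBall (0 : E) 1 := by
    rw [mem_closedBall_iff_norm] at hx
    rwa [mem_closedBall_zero_iff, norm_smul, norm_inv, Real.norm_of_nonneg hr.le,
      inv_mul_le_one₀ hr]
  calc ‖f x‖ₑ = ‖f (c + r • r⁻¹ • (x - c))‖ₑ := by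
        rw [smul_inv_smul₀ hr.ne', add_sub_cancel]
    _ ≤ ENNReal.ofReal C * eLpNorm (fun y => f (c + r • y)) p (μ.restrict (ball 0 ρ)) :=
        bound _ (hV.comp_add_smul_mem f hf c r hr) _ preimage_mem
    _ = _ := by
        rw [← preimage_const_add_smul_ball c hr ρ,
          eLpNorm_comp_const_add_smul μ f p c hr, ← mul_assoc,
          ← ENNReal.ofReal_mul hC.le]

lemma exists_lipschitzOnWith_closedBall [CompleteSpace F] (hV : IsPolynomialLike V) {p : ℝ≥0∞}
    (hp : 1 ≤ p) {ρ : ℝ} (hρ : 0 < ρ) :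
    ∃ C : ℝ, 0 < C ∧ ∀ f ∈ V, ∀ (c : E) (r : ℝ), 0 < r →
      LipschitzOnWith (ENNReal.ofReal (C * r ^ (-(finrank ℝ E / p.toReal))) *
        eLpNorm (fderiv ℝ f) p (μ.restrict (ball c (ρ * r)))).toNNReal f (closedBall c r) := by
  obtain ⟨C, hC, bound⟩ := hV.range_fderivLinearMap.exists_enorm_le_mul_eLpNorm_ball μ hp hρ
  refine ⟨C, hC, fun f hf c r hr => (convex_closedBall c r).lipschitzOnWith_of_nnnorm_fderiv_le
    (𝕜 := ℝ) (fun x _ => hV.differentiable hf x) fun x hx => ?_⟩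
  have eLpNorm_ne_top : eLpNorm (fderiv ℝ f) p (μ.restrict (ball c (ρ * r))) ≠ ∞ :=
    (memLp_restrict_of_continuous_of_isBounded (hV.analyticOnNhd f hf).fderiv.continuous
      isBounded_ball p).eLpNorm_ne_top
  exact ENNReal.le_toNNReal_of_coe_le (bound _ ⟨⟨f, hf⟩, rfl⟩ c r hr x hx)
    (ENNReal.mul_ne_top ENNReal.ofReal_ne_top eLpNorm_ne_top)

lemma exists_eLpNorm_le_diam_rpow_mul_eLpNorm_fderiv [CompleteSpace F] [Nontrivial E]
    (hV : IsPolynomialLike V) {p : ℝ≥0∞} (hp : 1 ≤ p) (q : ℝ≥0∞) {ρ : ℝ} (hρ : 0 < ρ) :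
    ∃ C : ℝ, 0 < C ∧ ∀ T : Set E, MeasurableSet T → Bornology.IsBounded T →
      (∃ c, ball c (ρ * diam T) ⊆ T) → ∀ f ∈ V, ∫ x in T, f x ∂μ = 0 →
      eLpNorm f q (μ.restrict T) ≤
        ENNReal.ofReal (C * diam T ^ (1 + finrank ℝ E / q.toReal - finrank ℝ E / p.toReal)) *
          eLpNorm (fderiv ℝ f) p (μ.restrict T) := by
  obtain ⟨C, hC, lipschitz⟩ := hV.exists_lipschitzOnWith_closedBall μ hp hρ
  set v : ℝ := μ.real (ball 0 1)
  have hv : 0 < v := ENNReal.toReal_pos (measure_ball_pos μ 0 one_pos).ne' measure_ball_lt_top.ne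
  refine ⟨v ^ q.toReal⁻¹ * C, by positivity, fun T hT hT_bdd ⟨c, hc⟩ f hf hmean => ?_⟩
  rcases eq_or_ne (μ T) 0 with hT₀ | hT₀
  · simp [Measure.restrict_eq_zero.2 hT₀]
  set h := diam T
  have h_pos : 0 < h :=
    diam_pos (not_subsingleton_iff.1 fun hT_sub => hT₀ (hT_sub.measure_zero μ)) hT_bdd
  have subset_closedBall : T ⊆ closedBall c h := fun x hx =>
    dist_le_diam_of_mem hT_bdd hx (hc (mem_ball_self (by positivity)))
  calc eLpNorm f q (μ.restrict T)
      ≤ ENNReal.ofReal (v ^ q.toReal⁻¹ * h ^ (1 + finrank ℝ E / q.toReal)) * _ :=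
        eLpNorm_restrict_le_diam_rpow_of_lipschitzOnWith μ hT hT_bdd
          ((lipschitz f hf c h h_pos).mono subset_closedBall) hmean
    _ ≤ ENNReal.ofReal (v ^ q.toReal⁻¹ * h ^ (1 + finrank ℝ E / q.toReal)) *
          (ENNReal.ofReal (C * h ^ (-(finrank ℝ E / p.toReal))) *
            eLpNorm (fderiv ℝ f) p (μ.restrict T)) := by
        gcongr
        refine ENNReal.coe_toNNReal_le_self.trans ?_
        gcongr
    _ = _ := by
        rw [← mul_assoc, ← ENNReal.ofReal_mul (by positivity), mul_mul_mul_comm,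
          ← Real.rpow_add h_pos, sub_eq_add_neg]

end IsPolynomialLike

theorem poincare_wirtinger_sobolev_broken_general [CompleteSpace F] [Nontrivial E]
    {V : Submodule ℝ (E → F)} (hV : IsPolynomialLike V) {ρ p q : ℝ} (hρ : 0 < ρ) (hp : 1 ≤ p)
    (hpq : p ≤ q) (hsob : 1 / p - 1 / (finrank ℝ E : ℝ) ≤ 1 / q) :
    ∃ C : ℝ, 0 < C ∧ ∀ {ι : Type*} [Countable ι] (Ω : Set E) (T : ι → Set E),
      (∀ i, MeasurableSet (T i)) → (∀ i, Bornology.IsBounded (T i)) →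
      BddAbove (range fun i => diam (T i)) → (∀ i, ∃ c, ball c (ρ * diam (T i)) ⊆ T i) →
      μ (Ω \ ⋃ i, T i) = 0 →
      ∀ (w : E → F) (f : ι → E → F), (∀ i, f i ∈ V) → (∀ i, EqOn w (f i) (T i)) →
      (∀ i, ∫ x in T i, f i x ∂μ = 0) →
      eLpNorm w (ENNReal.ofReal q) (μ.restrict Ω) ≤
        ENNReal.ofReal
            (C * (⨆ i, diam (T i)) ^ (1 + (finrank ℝ E : ℝ) / q - (finrank ℝ E : ℝ) / p)) *
          (∑' i, eLpNorm (fderiv ℝ (f i)) (ENNReal.ofReal p) (μ.restrict (T i)) ^ p) ^ (1 / p) := by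
  have hp₀ : 0 < p := one_pos.trans_le hp
  have hq₀ : 0 < q := hp₀.trans_le hpq
  have exponent_nonneg : 0 ≤ 1 + (finrank ℝ E : ℝ) / q - (finrank ℝ E : ℝ) / p := by
    have hd : (0 : ℝ) < finrank ℝ E := Nat.cast_pos.2 Module.finrank_pos
    have : (finrank ℝ E : ℝ) * (1 / p - 1 / finrank ℝ E) ≤ finrank ℝ E * (1 / q) := by gcongr
    rw [mul_sub, mul_one_div_cancel hd.ne', mul_one_div, mul_one_div] at this
    linarith
  obtain ⟨C, hC, local_bound⟩ := hV.exists_eLpNorm_le_diam_rpow_mul_eLpNorm_fderiv μ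
    (ENNReal.one_le_ofReal.2 hp) (ENNReal.ofReal q) hρ
  rw [ENNReal.toReal_ofReal hp₀.le, ENNReal.toReal_ofReal hq₀.le] at local_bound
  refine ⟨C, hC, fun {ι} _ Ω T hT hT_bdd h_bdd hball hnull w f hf hw hmean => ?_⟩
  refine (eLpNorm_mono_measure w (Measure.restrict_mono_ae (ae_le_set.2 hnull))).trans
    (eLpNorm_restrict_iUnion_le_mul_tsum_rpow hp₀ hpq fun i => ?_)
  calc eLpNorm w (ENNReal.ofReal q) (μ.restrict (T i))
      = eLpNorm (f i) (ENNReal.ofReal q) (μ.restrict (T i)) :=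
        eLpNorm_congr_ae (ae_restrict_of_forall_mem (hT i) (hw i))
    _ ≤ _ := local_bound (T i) (hT i) (hT_bdd i) (hball i) (f i) (hf i) (hmean i)
    _ ≤ _ := by
        gcongr
        exact le_ciSup h_bdd i

end PolynomialLike

section Polynomial

lemma totalDegree_aeval_le {σ τ R : Type*} [CommSemiring R] {g : σ → MvPolynomial τ R} {n : ℕ}
    (hg : ∀ i, (g i).totalDegree ≤ n) (P : MvPolynomial σ R) :
    (MvPolynomial.aeval g P).totalDegree ≤ P.totalDegree * n := by
  rw [MvPolynomial.aeval_def, MvPolynomial.eval₂_eq]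
  refine MvPolynomial.totalDegree_finsetSum_le fun m hm => ?_
  calc (MvPolynomial.C (P.coeff m) * ∏ i ∈ m.support, g i ^ m i).totalDegree
      ≤ (∏ i ∈ m.support, g i ^ m i).totalDegree := by
        simpa using MvPolynomial.totalDegree_mul (MvPolynomial.C (P.coeff m)) _
    _ ≤ ∑ i ∈ m.support, (g i ^ m i).totalDegree := MvPolynomial.totalDegree_finsetProd _ _
    _ ≤ ∑ i ∈ m.support, m i * n := by
        gcongr with i
        exact (MvPolynomial.totalDegree_pow _ _).trans (by gcongr; exact hg i)
    _ = (m.sum fun _ e => e) * n := by rw [Finsupp.sum, Finset.sum_mul]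
    _ ≤ P.totalDegree * n := by gcongr; exact MvPolynomial.le_totalDegree hm

/-- The space of polynomial functions on `ℝ^d` of total degree at most `k`, obtained from
`MvPolynomial.restrictTotalDegree` by evaluation. -/
def polySpace (d k : ℕ) : Submodule ℝ (EuclideanSpace ℝ (Fin d) → ℝ) :=
  (MvPolynomial.restrictTotalDegree (Fin d) ℝ k).map
    (LinearMap.pi fun x => (MvPolynomial.aeval (R := ℝ) (fun i => x i)).toLinearMap)

lemma mem_polySpace {d k : ℕ} {w : EuclideanSpace ℝ (Fin d) → ℝ} :
    w ∈ polySpace d k ↔ IsPolyDegLE d k w := by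
  simp only [polySpace, IsPolyDegLE, Submodule.mem_map, MvPolynomial.mem_restrictTotalDegree,
    funext_iff, LinearMap.pi_apply, AlgHom.toLinearMap_apply, MvPolynomial.aeval_eq_eval, eq_comm]

lemma IsPolyDegLE.analyticOnNhd {d k : ℕ} {w : EuclideanSpace ℝ (Fin d) → ℝ}
    (hw : IsPolyDegLE d k w) : AnalyticOnNhd ℝ w univ := by
  obtain ⟨P, -, hP⟩ := hw
  obtain rfl : w = fun x => MvPolynomial.aeval (fun i => x i) P :=
    funext fun x => by rw [hP, MvPolynomial.aeval_eq_eval]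
  exact AnalyticOnNhd.aeval_mvPolynomial
    (fun i x _ => (EuclideanSpace.proj (𝕜 := ℝ) i).analyticAt x) P

lemma IsPolyDegLE.comp_const_add_smul {d k : ℕ} {w : EuclideanSpace ℝ (Fin d) → ℝ}
    (hw : IsPolyDegLE d k w) (c : EuclideanSpace ℝ (Fin d)) (r : ℝ) :
    IsPolyDegLE d k fun x => w (c + r • x) := by
  obtain ⟨P, hPk, hP⟩ := hw
  let g (i : Fin d) : MvPolynomial (Fin d) ℝ :=
    MvPolynomial.C (c i) + MvPolynomial.C r * MvPolynomial.X i
  have totalDegree_g (i) : (g i).totalDegree ≤ 1 :=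
    (MvPolynomial.totalDegree_add _ _).trans
      (max_le (by simp) ((MvPolynomial.totalDegree_mul _ _).trans (by simp)))
  refine ⟨MvPolynomial.aeval g P, ?_, fun x => ?_⟩
  · exact (totalDegree_aeval_le totalDegree_g P).trans (by simpa using hPk)
  · simp only [hP, ← MvPolynomial.aeval_eq_eval, ← AlgHom.comp_apply, MvPolynomial.comp_aeval]
    simp [g]

lemma isPolynomialLike_polySpace (d k : ℕ) : IsPolynomialLike (polySpace d k) where
  finiteDimensional := by
    unfold polySpace
    infer_instance
  analyticOnNhd _ hf := (mem_polySpace.1 hf).analyticOnNhd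
  comp_add_smul_mem _ hf c r _ := mem_polySpace.2 ((mem_polySpace.1 hf).comp_const_add_smul c r)

end Polynomial

lemma eLpNorm_gradient {H : Type*} [NormedAddCommGroup H] [InnerProductSpace ℝ H] [CompleteSpace H]
    [MeasurableSpace H] (f : H → ℝ) (p : ℝ≥0∞) (μ : Measure H) :
    eLpNorm (fun x => gradient f x) p μ = eLpNorm (fderiv ℝ f) p μ :=
  eLpNorm_congr_norm_ae (.of_forall fun _ => LinearIsometryEquiv.norm_map _ _)

/-- Poincaré–Wirtinger–Sobolev inequality for broken polynomial functions with local zero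
averages: `‖w‖_{L^q(Ω)} ≤ C h^{1 + d/q - d/p} ‖∇_h w‖_{L^p(Ω)}`. -/
theorem poincare_wirtinger_sobolev_broken
    (d k : ℕ) (hd : 1 ≤ d) (ρ : ℝ) (hρ : 0 < ρ) (p q : ℝ)
    (hp : 1 ≤ p) (hpq : p ≤ q) (hsob : 1 / p - 1 / (d : ℝ) ≤ 1 / q) :
    ∃ C : ℝ, 0 < C ∧
      ∀ Ω : Set (EuclideanSpace ℝ (Fin d)), IsOpen Ω → Bornology.IsBounded Ω →
      ∀ (n : ℕ) (T : Fin n → Set (EuclideanSpace ℝ (Fin d))),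
        (∀ i, IsOpen (T i)) → (∀ i, T i ⊆ Ω) →
        Pairwise (Function.onFun Disjoint T) →
        (∀ i, StarShapedWrtBall ρ (T i)) →
        volume (Ω \ ⋃ i, T i) = 0 →
      ∀ (w : EuclideanSpace ℝ (Fin d) → ℝ)
        (P : Fin n → EuclideanSpace ℝ (Fin d) → ℝ),
        (∀ i, IsPolyDegLE d k (P i)) →
        (∀ i, Set.EqOn w (P i) (T i)) →
        (∀ i, (∫ x in T i, P i x) = 0) →
        eLpNorm w (ENNReal.ofReal q) (volume.restrict Ω)
          ≤ ENNReal.ofReal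
              (C * (⨆ i, Metric.diam (T i)) ^ (1 + (d : ℝ) / q - (d : ℝ) / p)) *
            (∑ i, (eLpNorm (fun x => gradient (P i) x) (ENNReal.ofReal p)
                (volume.restrict (T i))) ^ p) ^ (1 / p) := by
  have : Nonempty (Fin d) := ⟨⟨0, hd⟩⟩
  obtain ⟨C, hC, bound⟩ := poincare_wirtinger_sobolev_broken_general volume
    (isPolynomialLike_polySpace d k) hρ hp hpq (by simpa using hsob)
  refine ⟨C, hC, fun Ω _ hΩ n T hT hTΩ _ hstar hnull w P hP hw hmean => ?_⟩
  simpa [eLpNorm_gradient] using bound Ω T (fun i => (hT i).measurableSet)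
    (fun i => hΩ.subset (hTΩ i)) (finite_range _).bddAbove
    (fun i => (hstar i).imp fun _ => And.left) hnull w P (fun i => mem_polySpace.2 (hP i)) hw hmean
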